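/- Let G be a finite connected simple graph. For k ≥ 1, let W(2k) denote the number of closed walks of length 2k in G (over all starting vertices) and B(2k) the number of balanced closed walks of length 2k in G. Then lim_{k→∞} B(2k)^{1/k} and lim_{k→∞} W(2k)^{1/k} both exist and are equal, their common value being ρ(G)², the square of the spectral radius of G. -/

import Mathlib

noncomputable section

open Filter

open scoped Classical

/-- The (real) adjacency matrix of a finite simple graph. -/
def graphAdjMatrix {V : Type*} [Fintype V] (G : SimpleGraph V) : Matrix V V ℝ :=
  Matrix.of fun a b => if G.Adj a b then (1 : ℝ) else 0

/-- The spectral radius of a finite simple graph: the largest (real) eigenvalue of its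
adjacency matrix, i.e. the largest real root of the characteristic polynomial. -/
def graphSpectralRadius {V : Type*} [Fintype V] [DecidableEq V] (G : SimpleGraph V) : ℝ :=
  sSup {x : ℝ | (graphAdjMatrix G).charpoly.IsRoot x}

/-- `W(h)`: the number of closed walks of length `h` in `G`, over all starting vertices. -/
def closedWalkCount {V : Type*} [Fintype V] (G : SimpleGraph V) (h : ℕ) : ℕ :=
  ∑ v : V, Nat.card {w : G.Walk v v // w.length = h}

/-- A closed walk is balanced if each edge is traversed the same number of times in
each of its two directions. -/
def IsBalancedWalk {V : Type*} [DecidableEq V] {G : SimpleGraph V} {v : V}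
    (w : G.Walk v v) : Prop :=
  ∀ x y : V,
    (w.darts.map fun d => d.toProd).count (x, y) =
      (w.darts.map fun d => d.toProd).count (y, x)

/-- `B(h)`: the number of balanced closed walks of length `h` in `G`. -/
def balancedWalkCount {V : Type*} [Fintype V] [DecidableEq V] (G : SimpleGraph V) (h : ℕ) : ℕ :=
  ∑ v : V, Nat.card {w : G.Walk v v // w.length = h ∧ IsBalancedWalk w}

/-!
Write `ρ` for the spectral radius. The adjacency matrix has nonnegative entries, so every eigenvalue
`μ` satisfies `|μ| ≤ ρ`, and `W(2k) = ∑ μ ^ (2k)` lies between `ρ ^ (2k)` and `|V| ρ ^ (2k)`.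

Cutting closed walks at their midpoints shows that `W(2k)` is the sum over `u, v` of the squared
number of walks of length `k` from `u` to `v`. Sort these walks by how often they traverse each
ordered pair of vertices. There are at most `(k + 1) ^ (|V|²)` classes, and if `p` and `q` lie in
the same class then `p` followed by the reverse of `q` is balanced. By Cauchy–Schwarz,
`W(2k) ≤ (k + 1) ^ (|V|²) B(2k)`, and the polynomial factor disappears in the `k`-th root.
-/

section Roots

theorem tendsto_const_rpow_one_div {c : ℝ} (hc : c ≠ 0) :
    Tendsto (fun k : ℕ => c ^ (1 / (k : ℝ))) atTop (nhds 1) := by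
  simpa only [Real.rpow_zero, Function.comp_def] using
    (Real.continuous_const_rpow hc).continuousAt.tendsto.comp tendsto_one_div_atTop_nhds_zero_nat

theorem tendsto_add_one_pow_rpow_one_div (d : ℕ) :
    Tendsto (fun k : ℕ => (((k : ℝ) + 1) ^ d) ^ (1 / (k : ℝ))) atTop (nhds 1) := by
  have h_root : Tendsto (fun k : ℕ => ((k : ℝ) + 1) ^ (1 / (k : ℝ))) atTop (nhds 1) := by
    have h_succ : Tendsto (fun k : ℕ => (k : ℝ) + 1) atTop atTop :=
      tendsto_atTop_add_const_right _ _ tendsto_natCast_atTop_atTop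
    simpa [Function.comp_def] using
      (tendsto_rpow_div_mul_add 1 1 (-1) zero_ne_one).comp h_succ
  have h_pow := h_root.pow d
  rw [one_pow] at h_pow
  exact h_pow.congr fun k => Real.rpow_pow_comm (by positivity) _ _

theorem tendsto_rpow_one_div_of_pow_le {a p q : ℕ → ℝ} {r : ℝ} (hr : 0 ≤ r)
    (hp_pos : ∀ k, 0 < p k) (hq_nonneg : ∀ k, 0 ≤ q k)
    (hp : Tendsto (fun k : ℕ => p k ^ (1 / (k : ℝ))) atTop (nhds 1))
    (hq : Tendsto (fun k : ℕ => q k ^ (1 / (k : ℝ))) atTop (nhds 1))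
    (h_lower : ∀ k, r ^ k ≤ p k * a k) (h_upper : ∀ k, a k ≤ q k * r ^ k) :
    Tendsto (fun k : ℕ => a k ^ (1 / (k : ℝ))) atTop (nhds r) := by
  have h_root : ∀ k : ℕ, 1 ≤ k → (r ^ k) ^ (1 / (k : ℝ)) = r := fun k hk => by
    rw [one_div, Real.pow_rpow_inv_natCast hr (Nat.one_le_iff_ne_zero.mp hk)]
  have ha : ∀ k, 0 ≤ a k := fun k =>
    nonneg_of_mul_nonneg_right ((pow_nonneg hr k).trans (h_lower k)) (hp_pos k)
  have h_left : Tendsto (fun k : ℕ => r / p k ^ (1 / (k : ℝ))) atTop (nhds r) := by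
    simpa only [div_one, Pi.div_def] using tendsto_const_nhds.div hp one_ne_zero
  have h_right : Tendsto (fun k : ℕ => q k ^ (1 / (k : ℝ)) * r) atTop (nhds r) := by
    simpa only [one_mul] using hq.mul_const r
  refine tendsto_of_tendsto_of_tendsto_of_le_of_le' h_left h_right ?_ ?_
  · filter_upwards [eventually_ge_atTop 1] with k hk
    rw [div_le_iff₀' (Real.rpow_pos_of_pos (hp_pos k) _)]
    calc r = (r ^ k) ^ (1 / (k : ℝ)) := (h_root k hk).symm
      _ ≤ (p k * a k) ^ (1 / (k : ℝ)) :=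
        Real.rpow_le_rpow (pow_nonneg hr k) (h_lower k) (by positivity)
      _ = p k ^ (1 / (k : ℝ)) * a k ^ (1 / (k : ℝ)) := Real.mul_rpow (hp_pos k).le (ha k)
  · filter_upwards [eventually_ge_atTop 1] with k hk
    calc a k ^ (1 / (k : ℝ)) ≤ (q k * r ^ k) ^ (1 / (k : ℝ)) :=
        Real.rpow_le_rpow (ha k) (h_upper k) (by positivity)
      _ = q k ^ (1 / (k : ℝ)) * r := by
        rw [Real.mul_rpow (hq_nonneg k) (pow_nonneg hr k), h_root k hk]

end Roots

section Eigenvalues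

open Matrix

open scoped ComplexOrder MatrixOrder

variable {n 𝕜 : Type*} [Fintype n] [RCLike 𝕜]

theorem trace_pow_eq_sum_eigenvalues_pow [DecidableEq n] {A : Matrix n n 𝕜}
    (hA : A.IsHermitian) (k : ℕ) :
    (A ^ k).trace = ∑ i, (hA.eigenvalues i : 𝕜) ^ k := by
  conv_lhs => rw [hA.spectral_theorem, ← map_pow, Unitary.conjStarAlgAut_apply,
    trace_mul_cycle, Unitary.coe_star_mul_self, one_mul, diagonal_pow]
  simp only [trace_diagonal, Pi.pow_apply, Function.comp_apply]

theorem dotProduct_mulVec_le_of_eigenvalues_le [DecidableEq n] {A : Matrix n n 𝕜}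
    (hA : A.IsHermitian) {c : ℝ} (hc : ∀ i, hA.eigenvalues i ≤ c) (x : n → 𝕜) :
    star x ⬝ᵥ A *ᵥ x ≤ c * (star x ⬝ᵥ x) := by
  have h_le : A ≤ algebraMap ℝ (Matrix n n 𝕜) c := by
    refine le_algebraMap_of_spectrum_le ?_ hA.isSelfAdjoint
    rw [hA.spectrum_real_eq_range_eigenvalues]
    exact Set.forall_mem_range.mpr hc
  have h_nonneg := (Matrix.le_iff.mp h_le).dotProduct_mulVec_nonneg x
  rw [sub_mulVec, dotProduct_sub, sub_nonneg, Algebra.algebraMap_eq_smul_one, smul_mulVec,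
    one_mulVec, dotProduct_smul, RCLike.real_smul_eq_coe_mul] at h_nonneg
  exact h_nonneg

theorem abs_dotProduct_mulVec_le {m n R : Type*} [Fintype m] [Fintype n] [Ring R] [LinearOrder R]
    [IsOrderedRing R] {A : Matrix m n R} (hA : ∀ i j, 0 ≤ A i j) (x : m → R) (y : n → R) :
    |x ⬝ᵥ A *ᵥ y| ≤ |x| ⬝ᵥ A *ᵥ |y| := by
  simp only [dotProduct, mulVec, Pi.abs_apply]
  refine (Finset.abs_sum_le_sum_abs _ _).trans (Finset.sum_le_sum fun i _ => ?_)
  rw [abs_mul]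
  refine mul_le_mul_of_nonneg_left ?_ (abs_nonneg _)
  refine (Finset.abs_sum_le_sum_abs _ _).trans_eq (Finset.sum_congr rfl fun j _ => ?_)
  rw [abs_mul, abs_of_nonneg (hA i j)]

theorem abs_eigenvalues_le_of_nonneg [DecidableEq n] {A : Matrix n n ℝ} (hA : A.IsHermitian)
    (hA_nonneg : ∀ i j, 0 ≤ A i j) {c : ℝ} (hc : ∀ i, hA.eigenvalues i ≤ c) (i : n) :
    |hA.eigenvalues i| ≤ c := by
  set x : n → ℝ := ⇑(hA.eigenvectorBasis i)
  have h_eig : hA.eigenvalues i = x ⬝ᵥ A *ᵥ x := hA.eigenvalues_eq i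
  have h_unit : |x| ⬝ᵥ |x| = 1 := by
    have h_norm := hA.eigenvectorBasis.norm_eq_one i
    rw [EuclideanSpace.norm_eq, Real.sqrt_eq_one] at h_norm
    simpa only [dotProduct, Pi.abs_apply, ← sq, Real.norm_eq_abs] using h_norm
  calc |hA.eigenvalues i| ≤ |x| ⬝ᵥ A *ᵥ |x| := h_eig ▸ abs_dotProduct_mulVec_le hA_nonneg x x
    _ ≤ c * (|x| ⬝ᵥ |x|) := dotProduct_mulVec_le_of_eigenvalues_le hA hc |x|
    _ = c := by rw [h_unit, mul_one]

end Eigenvalues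

section ClosedWalks

variable {V : Type*} [Fintype V] (G : SimpleGraph V)

theorem graphAdjMatrix_eq_adjMatrix : graphAdjMatrix G = G.adjMatrix ℝ := by
  ext a b
  simp only [graphAdjMatrix, Matrix.of_apply, SimpleGraph.adjMatrix_apply]

theorem graphAdjMatrix_nonneg (a b : V) : 0 ≤ graphAdjMatrix G a b := by
  rw [graphAdjMatrix, Matrix.of_apply]
  split_ifs <;> norm_num

theorem isHermitian_graphAdjMatrix : (graphAdjMatrix G).IsHermitian := by
  rw [graphAdjMatrix_eq_adjMatrix, Matrix.IsHermitian, Matrix.conjTranspose_eq_transpose_of_trivial,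
    SimpleGraph.transpose_adjMatrix]

variable [DecidableEq V]

theorem graphSpectralRadius_eq_iSup_eigenvalues :
    graphSpectralRadius G = ⨆ i, (isHermitian_graphAdjMatrix G).eigenvalues i := by
  have h_roots : {x | (graphAdjMatrix G).charpoly.IsRoot x} =
      Set.range (isHermitian_graphAdjMatrix G).eigenvalues := by
    rw [← Matrix.IsHermitian.spectrum_real_eq_range_eigenvalues]
    ext x
    exact Matrix.mem_spectrum_iff_isRoot_charpoly.symm
  rw [graphSpectralRadius, h_roots, sSup_range]

theorem eigenvalues_le_graphSpectralRadius (i : V) :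
    (isHermitian_graphAdjMatrix G).eigenvalues i ≤ graphSpectralRadius G := by
  rw [graphSpectralRadius_eq_iSup_eigenvalues]
  exact le_ciSup (Set.finite_range _).bddAbove i

theorem exists_eigenvalues_eq_graphSpectralRadius [Nonempty V] :
    ∃ i, (isHermitian_graphAdjMatrix G).eigenvalues i = graphSpectralRadius G := by
  rw [graphSpectralRadius_eq_iSup_eigenvalues]
  exact exists_eq_ciSup_of_finite

theorem abs_eigenvalues_le_graphSpectralRadius (i : V) :
    |(isHermitian_graphAdjMatrix G).eigenvalues i| ≤ graphSpectralRadius G :=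
  abs_eigenvalues_le_of_nonneg _ (graphAdjMatrix_nonneg G) (eigenvalues_le_graphSpectralRadius G) i

theorem graphAdjMatrix_pow_apply (m : ℕ) (u v : V) :
    (graphAdjMatrix G ^ m) u v = Nat.card {w : G.Walk u v // w.length = m} := by
  rw [graphAdjMatrix_eq_adjMatrix, SimpleGraph.adjMatrix_pow_apply_eq_card_walk,
    Nat.card_eq_fintype_card]
  rfl

theorem closedWalkCount_eq_trace (m : ℕ) :
    (closedWalkCount G m : ℝ) = (graphAdjMatrix G ^ m).trace := by
  simp only [closedWalkCount, Nat.cast_sum, Matrix.trace, Matrix.diag_apply,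
    graphAdjMatrix_pow_apply]

theorem closedWalkCount_two_mul_eq_sum_eigenvalues (k : ℕ) :
    (closedWalkCount G (2 * k) : ℝ) =
      ∑ i, ((isHermitian_graphAdjMatrix G).eigenvalues i ^ 2) ^ k := by
  rw [closedWalkCount_eq_trace, trace_pow_eq_sum_eigenvalues_pow (isHermitian_graphAdjMatrix G)]
  simp only [RCLike.ofReal_real_eq_id, id_eq, pow_mul]

theorem graphSpectralRadius_sq_pow_le_closedWalkCount [Nonempty V] (k : ℕ) :
    (graphSpectralRadius G ^ 2) ^ k ≤ closedWalkCount G (2 * k) := by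
  obtain ⟨i, hi⟩ := exists_eigenvalues_eq_graphSpectralRadius G
  rw [closedWalkCount_two_mul_eq_sum_eigenvalues, ← hi]
  exact Finset.single_le_sum
    (f := fun j => ((isHermitian_graphAdjMatrix G).eigenvalues j ^ 2) ^ k)
    (fun j _ => by positivity) (Finset.mem_univ i)

theorem closedWalkCount_le_card_mul_graphSpectralRadius_sq_pow (k : ℕ) :
    (closedWalkCount G (2 * k) : ℝ) ≤ Fintype.card V * (graphSpectralRadius G ^ 2) ^ k := by
  rw [closedWalkCount_two_mul_eq_sum_eigenvalues, ← nsmul_eq_mul, ← Finset.card_univ]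
  refine Finset.sum_le_card_nsmul _ _ _ fun i _ => pow_le_pow_left₀ (sq_nonneg _) ?_ k
  exact sq_le_sq.mpr ((abs_eigenvalues_le_graphSpectralRadius G i).trans (le_abs_self _))

omit [DecidableEq V] in
theorem closedWalkCount_two_mul_eq_sum_sq (m : ℕ) :
    closedWalkCount G (2 * m) =
      ∑ u, ∑ v, Nat.card {w : G.Walk u v // w.length = m} ^ 2 := by
  have h_real : (closedWalkCount G (2 * m) : ℝ) =
      ∑ u, ∑ v, (Nat.card {w : G.Walk u v // w.length = m} : ℝ) ^ 2 := by
    have h_symm (u v : V) : (graphAdjMatrix G ^ m) v u = (graphAdjMatrix G ^ m) u v :=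
      ((isHermitian_graphAdjMatrix G).pow m).apply u v
    simp only [closedWalkCount_eq_trace, two_mul, pow_add, Matrix.trace, Matrix.diag_apply,
      Matrix.mul_apply, h_symm, graphAdjMatrix_pow_apply, sq]
  exact_mod_cast h_real

end ClosedWalks

section BalancedWalks

theorem natCard_sq_le_card_mul_natCard_pullbackSelf {α β : Type*} [Finite α] (f : α → β)
    {s : Finset β} (hf : ∀ a, f a ∈ s) :
    Nat.card α ^ 2 ≤ s.card * Nat.card f.PullbackSelf := by
  have := Fintype.ofFinite α
  have h_card : Nat.card α = ∑ b ∈ s, Finset.card {a | f a = b} := by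
    rw [Nat.card_eq_fintype_card]
    exact Finset.card_eq_sum_card_fiberwise fun a _ => hf a
  have h_pullback : Nat.card f.PullbackSelf = ∑ b ∈ s, Finset.card {a | f a = b} ^ 2 := by
    rw [Nat.card_eq_fintype_card, Fintype.card_subtype, Finset.card_eq_sum_card_fiberwise
      (f := fun p : α × α => f p.1) fun p _ => hf p.1]
    refine Finset.sum_congr rfl fun b _ => ?_
    rw [sq, ← Finset.card_product]
    congr 1
    ext p
    simp only [Finset.mem_filter, Finset.mem_univ, true_and, Finset.mem_product]
    exact ⟨fun h => ⟨h.2, h.1 ▸ h.2⟩, fun h => ⟨h.1.trans h.2.symm, h.1⟩⟩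
  rw [h_card, h_pullback]
  exact sq_sum_le_card_mul_sum_sq

variable {V : Type*} {G : SimpleGraph V} {u v w : V}

theorem walk_append_inj_of_length_eq {v' : V} {p : G.Walk u v} {q : G.Walk v w} {p' : G.Walk u v'}
    {q' : G.Walk v' w} (h : p.append q = p'.append q') (h_length : p.length = p'.length) :
    ∃ hv : v = v', p.copy rfl hv = p' ∧ q.copy hv rfl = q' := by
  obtain rfl : v = v' := by
    simpa [SimpleGraph.Walk.getVert_append, h_length] using
      congrArg (fun r => r.getVert p.length) h
  have h_support := congrArg SimpleGraph.Walk.support h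
  rw [SimpleGraph.Walk.support_append, SimpleGraph.Walk.support_append] at h_support
  obtain ⟨h_left, h_right⟩ := List.append_inj h_support (by simp [h_length])
  refine ⟨rfl, SimpleGraph.Walk.ext_support h_left, SimpleGraph.Walk.ext_support ?_⟩
  rw [SimpleGraph.Walk.copy_rfl_rfl, ← SimpleGraph.Walk.cons_tail_support, h_right,
    SimpleGraph.Walk.cons_tail_support]

variable [DecidableEq V]

/-- The multiplicity of an arc (an ordered pair of vertices) in a walk: how often the walk
traverses it in that direction. Pairs that are not adjacent have multiplicity zero. -/
def arcCount (p : G.Walk u v) (e : V × V) : ℕ :=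
  (p.darts.map fun d => d.toProd).count e

theorem arcCount_le_length (p : G.Walk u v) (e : V × V) : arcCount p e ≤ p.length :=
  List.count_le_length.trans_eq (by rw [List.length_map, SimpleGraph.Walk.length_darts])

theorem arcCount_append (p : G.Walk u v) (q : G.Walk v w) (e : V × V) :
    arcCount (p.append q) e = arcCount p e + arcCount q e := by
  rw [arcCount, SimpleGraph.Walk.darts_append, List.map_append, List.count_append]
  rfl

theorem arcCount_reverse (p : G.Walk u v) (e : V × V) :
    arcCount p.reverse e = arcCount p e.swap := by
  have h_symm : (fun d : G.Dart => d.toProd) ∘ SimpleGraph.Dart.symm =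
      Prod.swap ∘ fun d : G.Dart => d.toProd := rfl
  rw [arcCount, SimpleGraph.Walk.darts_reverse, List.map_reverse, List.count_reverse,
    List.map_map, h_symm, ← List.map_map]
  exact List.count_map_of_injective _ Prod.swap Prod.swap_injective e.swap

theorem isBalancedWalk_append_reverse {p q : G.Walk u v} (h : arcCount p = arcCount q) :
    IsBalancedWalk (p.append q.reverse) := by
  intro x y
  change arcCount _ (x, y) = arcCount _ (y, x)
  rw [arcCount_append, arcCount_append, arcCount_reverse, arcCount_reverse, h, Prod.swap_prod_mk,
    Prod.swap_prod_mk, add_comm]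

variable [Fintype V] (G)

/-- All arc multiplicities of a walk from `u` to `v` of length `m`. Fixing the length confines the
values to the finite set of functions bounded by `m`. -/
def arcProfile (u v : V) (m : ℕ) (p : {p : G.Walk u v // p.length = m}) : V × V → ℕ :=
  arcCount p.1

theorem natCard_walk_sq_le (u v : V) (m : ℕ) :
    Nat.card {p : G.Walk u v // p.length = m} ^ 2 ≤
      (m + 1) ^ Fintype.card (V × V) * Nat.card (arcProfile G u v m).PullbackSelf := by
  have h_mem (p : {p : G.Walk u v // p.length = m}) :
      arcProfile G u v m p ∈ Fintype.piFinset fun _ => Finset.range (m + 1) :=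
    Fintype.mem_piFinset.mpr fun e =>
      Finset.mem_range_succ_iff.mpr ((arcCount_le_length p.1 e).trans_eq p.2)
  simpa only [Fintype.card_piFinset, Finset.card_range, Finset.prod_const, Finset.card_univ] using
    natCard_sq_le_card_mul_natCard_pullbackSelf _ h_mem

theorem sum_natCard_pullbackSelf_arcProfile_le (u : V) (m : ℕ) :
    ∑ v, Nat.card (arcProfile G u v m).PullbackSelf ≤
      Nat.card {p : G.Walk u u // p.length = 2 * m ∧ IsBalancedWalk p} := by
  have : Finite {p : G.Walk u u // p.length = 2 * m ∧ IsBalancedWalk p} :=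
    Finite.Set.subset {p : G.Walk u u | p.length = 2 * m} fun _ hp => hp.1
  rw [← Nat.card_sigma]
  refine Nat.card_le_card_of_injective
    (fun x => ⟨x.2.1.1.1.append x.2.1.2.1.reverse, ?_, isBalancedWalk_append_reverse x.2.2⟩) ?_
  · rw [SimpleGraph.Walk.length_append, SimpleGraph.Walk.length_reverse, x.2.1.1.2, x.2.1.2.2,
      two_mul]
  · rintro ⟨v, ⟨⟨p, hp⟩, ⟨q, hq⟩⟩, h⟩ ⟨v', ⟨⟨p', hp'⟩, ⟨q', hq'⟩⟩, h'⟩ h_append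
    have h_append : p.append q.reverse = p'.append q'.reverse := congrArg Subtype.val h_append
    obtain ⟨rfl, rfl, h_reverse⟩ := walk_append_inj_of_length_eq h_append (hp.trans hp'.symm)
    obtain rfl := SimpleGraph.Walk.reverse_injective h_reverse
    rfl

theorem balancedWalkCount_le_closedWalkCount (m : ℕ) :
    balancedWalkCount G m ≤ closedWalkCount G m :=
  Finset.sum_le_sum fun _ _ =>
    Nat.card_mono (Set.toFinite {p : G.Walk _ _ | p.length = m}) fun _ hp => hp.1

theorem closedWalkCount_two_mul_le (m : ℕ) :
    closedWalkCount G (2 * m) ≤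
      (m + 1) ^ Fintype.card (V × V) * balancedWalkCount G (2 * m) := by
  rw [closedWalkCount_two_mul_eq_sum_sq, balancedWalkCount, Finset.mul_sum]
  refine Finset.sum_le_sum fun u _ => ?_
  calc ∑ v, Nat.card {p : G.Walk u v // p.length = m} ^ 2
      ≤ ∑ v, (m + 1) ^ Fintype.card (V × V) * Nat.card (arcProfile G u v m).PullbackSelf :=
        Finset.sum_le_sum fun v _ => natCard_walk_sq_le G u v m
    _ = (m + 1) ^ Fintype.card (V × V) * ∑ v, Nat.card (arcProfile G u v m).PullbackSelf :=
        (Finset.mul_sum _ _ _).symm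
    _ ≤ _ := Nat.mul_le_mul_left _ (sum_natCard_pullbackSelf_arcProfile_le G u m)

end BalancedWalks

theorem balanced_and_even_closed_walk_growth_general {V : Type*} [Fintype V] [DecidableEq V]
    [Nonempty V] (G : SimpleGraph V) :
    Tendsto (fun k : ℕ => (balancedWalkCount G (2 * k) : ℝ) ^ (1 / (k : ℝ))) atTop
        (nhds (graphSpectralRadius G ^ 2)) ∧
      Tendsto (fun k : ℕ => (closedWalkCount G (2 * k) : ℝ) ^ (1 / (k : ℝ))) atTop
        (nhds (graphSpectralRadius G ^ 2)) := by
  have h_card : Tendsto (fun k : ℕ => (Fintype.card V : ℝ) ^ (1 / (k : ℝ))) atTop (nhds 1) :=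
    tendsto_const_rpow_one_div (Nat.cast_ne_zero.mpr Fintype.card_ne_zero)
  have h_upper := closedWalkCount_le_card_mul_graphSpectralRadius_sq_pow G
  have h_lower := graphSpectralRadius_sq_pow_le_closedWalkCount G
  constructor
  · refine tendsto_rpow_one_div_of_pow_le (sq_nonneg _) (fun k => by positivity)
      (fun _ => Nat.cast_nonneg _) (tendsto_add_one_pow_rpow_one_div (Fintype.card (V × V)))
      h_card (fun k => (h_lower k).trans ?_) fun k => le_trans ?_ (h_upper k)
    · exact_mod_cast closedWalkCount_two_mul_le G k
    · exact_mod_cast balancedWalkCount_le_closedWalkCount G (2 * k)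
  · exact tendsto_rpow_one_div_of_pow_le (sq_nonneg _) (fun _ => one_pos)
      (fun _ => Nat.cast_nonneg _) (tendsto_const_rpow_one_div one_ne_zero) h_card
      (fun k => by simpa only [one_mul] using h_lower k) h_upper

/-- For a finite connected simple graph, `lim B(2k)^(1/k)` and `lim W(2k)^(1/k)` both exist
and equal the square of the spectral radius of the graph. -/
theorem balanced_and_even_closed_walk_growth {V : Type*} [Fintype V] [DecidableEq V]
    (G : SimpleGraph V) (hG : G.Connected) :
    Tendsto (fun k : ℕ => (balancedWalkCount G (2 * k) : ℝ) ^ (1 / (k : ℝ))) atTop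
        (nhds (graphSpectralRadius G ^ 2)) ∧
      Tendsto (fun k : ℕ => (closedWalkCount G (2 * k) : ℝ) ^ (1 / (k : ℝ))) atTop
        (nhds (graphSpectralRadius G ^ 2)) :=
  have := hG.nonempty
  balanced_and_even_closed_walk_growth_general G
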